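/- Fix integers d ≥ 2 and n ≥ 2, set r = d mod 2, c(k) = exp(−iπ k(k+r)/d) and c_{k,l} = c(k)c(l). For k, l ∈ {0, …, d−1} let Π_{k,l} = (X_d^{k} Z_d^{l} ⊗ I_d) Φ_d Φ_d† ((Z_d†)^{l} (X_d†)^{k} ⊗ I_d) on ℂ^{Fin d × Fin d}, and let U_{k,l} be the (n−1)-fold tensor power of X_d^{k} (Z_d†)^{l}, realized as the matrix on index type (Fin (n−1) → Fin d) with entries (f,g) ↦ ∏_j (X_d^{k}(Z_d†)^{l})(f j, g j). Then the operator A = ∑_{k=0}^{d−1} ∑_{l=0}^{d−1} c_{k,l}^{−1} · (Π_{k,l} ⊗ U_{k,l}) is unitary; consequently the decryption operator of the protocol, which is A composed with a fixed unitary on the first two factors, is unitary. -/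

import Mathlib

open Matrix Kronecker Complex

noncomputable section

/-- The generalized shift (Pauli X) operator on `ℂ^d`: `X_d(j,k) = 1` iff `j = k+1 (mod d)`. -/
def Xd (d : ℕ) : Matrix (Fin d) (Fin d) ℂ :=
  Matrix.of fun j k => if (j : ℕ) = ((k : ℕ) + 1) % d then 1 else 0

/-- The generalized phase (Pauli Z) operator on `ℂ^d`: `Z_d(j,k) = ω^k` iff `j = k`,
where `ω = exp(2πi/d)`. -/
def Zd (d : ℕ) : Matrix (Fin d) (Fin d) ℂ :=
  Matrix.of fun j k =>
    if j = k then Complex.exp (2 * Real.pi * Complex.I * (k : ℕ) / d) else 0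

/-- The generalized Bell state `Φ_d ∈ ℂ^{Fin d × Fin d}`, `Φ_d(p,q) = δ_{p,q}/√d`. -/
def Bell (d : ℕ) : Fin d × Fin d → ℂ :=
  fun p => if p.1 = p.2 then 1 / (Real.sqrt d : ℂ) else 0

/-- The rank-one operator `Π_{i,j} = (X^i Z^j ⊗ I) Φ_d Φ_d† ((Z†)^j (X†)^i ⊗ I)`. -/
def Pi' (d i j : ℕ) : Matrix (Fin d × Fin d) (Fin d × Fin d) ℂ :=
  ((Xd d ^ i * Zd d ^ j) ⊗ₖ (1 : Matrix (Fin d) (Fin d) ℂ)) *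
    vecMulVec (Bell d) (star (Bell d)) *
    (((Zd d)ᴴ ^ j * (Xd d)ᴴ ^ i) ⊗ₖ (1 : Matrix (Fin d) (Fin d) ℂ))

/-- The Chu sequence `c(k) = exp(−iπ k(k + (d mod 2))/d)`. -/
def chu (d k : ℕ) : ℂ :=
  Complex.exp (-(Real.pi * Complex.I * (k : ℂ) * ((k : ℂ) + ((d % 2 : ℕ) : ℂ)) / d))

/-- The `m`-fold tensor (Kronecker) power of a `d×d` matrix, as a matrix
indexed by `Fin m → Fin d`: entries `(f,g) ↦ ∏ i, M (f i) (g i)`. -/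
def tpow (d m : ℕ) (M : Matrix (Fin d) (Fin d) ℂ) :
    Matrix (Fin m → Fin d) (Fin m → Fin d) ℂ :=
  Matrix.of fun f g => ∏ i, M (f i) (g i)

/-!
The Bell vectors `(X^k Z^l ⊗ I) Φ_d` form an orthonormal basis, so the sum is a controlled unitary:
it acts by a unitary operator on each summand of an orthogonal decomposition. To see that the Bell
vectors are orthonormal, collect them as the columns of a matrix. Since
`(X^k Z^l)(p, q) = δ_{p, q + k} ω^{lq}`, this matrix is the discrete Fourier transform of the second
factor followed by the permutation `(k, q) ↦ (q + k, q)` of the standard basis, and both are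
unitary.
-/

section UnitaryMatrices

variable {R m n ι : Type*} [CommRing R] [StarRing R] [Fintype m] [DecidableEq m]
  [Fintype n] [DecidableEq n]

theorem sum_kronecker_mem_unitaryGroup [Fintype ι] {P : ι → Matrix m m R}
    {U : ι → Matrix n n R} (hP : CompleteOrthogonalIdempotents P)
    (hPH : ∀ i, (P i).IsHermitian) (hU : ∀ i, U i ∈ unitaryGroup n R) :
    ∑ i, P i ⊗ₖ U i ∈ unitaryGroup (m × n) R := by
  classical
  have hmul (i j : ι) :
      (P i ⊗ₖ U i) * star (P j ⊗ₖ U j) = if i = j then P i ⊗ₖ (1 : Matrix n n R) else 0 := by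
    rw [star_eq_conjTranspose, conjTranspose_kronecker, hPH j, ← mul_kronecker_mul, hP.mul_eq]
    split_ifs with hij
    · rw [← hij, ← star_eq_conjTranspose, mem_unitaryGroup_iff.mp (hU i)]
    · exact zero_kronecker _
  rw [mem_unitaryGroup_iff, star_sum, Finset.sum_mul_sum]
  calc ∑ i, ∑ j, (P i ⊗ₖ U i) * star (P j ⊗ₖ U j)
      = ∑ i, P i ⊗ₖ (1 : Matrix n n R) := by simp [hmul]
    _ = (∑ i, P i) ⊗ₖ (1 : Matrix n n R) := by
        ext
        simp [Matrix.sum_apply, Finset.sum_mul]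
    _ = 1 := by rw [hP.complete, one_kronecker_one]

theorem completeOrthogonalIdempotents_vecMulVec_col {W : Matrix m m R}
    (hW : W ∈ unitaryGroup m R) :
    CompleteOrthogonalIdempotents fun i => vecMulVec (W.col i) (star (W.col i)) := by
  refine CompleteOrthogonalIdempotents.iff_ortho_complete.mpr ⟨fun i j hij => ?_, ?_⟩
  · have hcol : star (W.col i) ⬝ᵥ W.col j = 0 :=
      (congr_fun₂ (mem_unitaryGroup_iff'.mp hW) i j).trans (one_apply_ne hij)
    simp [vecMulVec_mul_vecMulVec, hcol]
  · rw [← mem_unitaryGroup_iff.mp hW]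
    ext p q
    simp [Matrix.sum_apply, mul_apply, vecMulVec_apply]

theorem diagonal_mem_unitaryGroup {v : m → R} (hv : ∀ i, v i ∈ unitary R) :
    diagonal v ∈ unitaryGroup m R := by
  simp [mem_unitaryGroup_iff, star_eq_conjTranspose, diagonal_conjTranspose, hv]

theorem permMatrix_mem_unitaryGroup (σ : Equiv.Perm m) :
    σ.permMatrix R ∈ unitaryGroup m R := by
  rw [mem_unitaryGroup_iff, star_eq_conjTranspose, conjTranspose_permMatrix, ← permMatrix_mul,
    inv_mul_cancel, permMatrix_one]

end UnitaryMatrices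

theorem permMatrixHom_addRight_apply {R G : Type*} [NonAssocSemiring R] [AddGroup G] [Fintype G]
    [DecidableEq G] (k p q : G) :
    permMatrixHom (R := R) (Equiv.addRight k) p q = if p = q + k then 1 else 0 := by
  simp [PEquiv.toMatrix_apply, ← sub_eq_add_neg, sub_eq_iff_eq_add]

theorem mem_unitary_of_norm_eq_one {𝕜 : Type*} [RCLike 𝕜] {z : 𝕜} (hz : ‖z‖ = 1) :
    z ∈ unitary 𝕜 := by
  simp [Unitary.mem_iff, RCLike.conj_mul, RCLike.mul_conj, hz]

/-- The discrete Fourier transform matrix of size `d` with kernel `ζ ^ (j * k)`, normalized by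
`1 / √d` so that it is unitary when `ζ` is a primitive `d`-th root of unity. -/
def dftMatrix (d : ℕ) (ζ : ℂ) : Matrix (Fin d) (Fin d) ℂ :=
  of fun j k => ζ ^ (j * k : ℕ) / (√d : ℝ)

theorem star_dftMatrix_mul_dftMatrix_apply {d : ℕ} {ζ : ℂ} (hζ : ‖ζ‖ = 1) (k l : Fin d) :
    (star (dftMatrix d ζ) * dftMatrix d ζ) k l =
      (∑ j ∈ Finset.range d, (ζ ^ (l : ℕ) / ζ ^ (k : ℕ)) ^ j) / d := by
  have hsqrt : ((√d : ℝ) : ℂ) * (√d : ℝ) = d := by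
    rw [← ofReal_mul, Real.mul_self_sqrt d.cast_nonneg, ofReal_natCast]
  have hentry (j : Fin d) : star (dftMatrix d ζ) k j * dftMatrix d ζ j l =
      (ζ ^ (l : ℕ) / ζ ^ (k : ℕ)) ^ (j : ℕ) / d := by
    calc star (dftMatrix d ζ) k j * dftMatrix d ζ j l
        = (ζ⁻¹ ^ (j * k : ℕ) * ζ ^ (j * l : ℕ)) / ((√d : ℝ) * (√d : ℝ)) := by
          rw [inv_eq_conj hζ]
          simp [dftMatrix, star_apply, div_mul_div_comm]
      _ = (ζ ^ (l : ℕ) / ζ ^ (k : ℕ)) ^ (j : ℕ) / d := by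
          rw [hsqrt]
          ring
  simp_rw [mul_apply, hentry, Finset.sum_range, Finset.sum_div]

theorem dftMatrix_mem_unitaryGroup {d : ℕ} {ζ : ℂ} (hζ : IsPrimitiveRoot ζ d) :
    dftMatrix d ζ ∈ unitaryGroup (Fin d) ℂ := by
  rw [mem_unitaryGroup_iff']
  ext k l
  have hd : d ≠ 0 := k.pos.ne'
  rw [star_dftMatrix_mul_dftMatrix_apply (hζ.norm'_eq_one hd)]
  obtain rfl | hkl := eq_or_ne k l
  · simp [hζ.ne_zero hd, hd]
  · have hne : ζ ^ (l : ℕ) / ζ ^ (k : ℕ) ≠ 1 := fun h =>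
      hkl (Fin.ext (hζ.pow_inj k.2 l.2 (eq_of_div_eq_one h).symm))
    have hpow : (ζ ^ (l : ℕ) / ζ ^ (k : ℕ)) ^ d = 1 := by
      rw [div_pow, pow_right_comm, pow_right_comm ζ k, hζ.pow_eq_one, one_pow, one_pow, div_one]
    rw [geom_sum_eq hne, hpow, sub_self, zero_div, zero_div, one_apply_ne hkl]

section TensorPower

variable {d : ℕ} (m : ℕ)

theorem tpow_mul (M N : Matrix (Fin d) (Fin d) ℂ) :
    tpow d m (M * N) = tpow d m M * tpow d m N := by
  ext f g
  simp [tpow, mul_apply, Finset.prod_univ_sum, Finset.prod_mul_distrib]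

theorem tpow_one : tpow d m 1 = 1 := by
  ext f g
  simp [tpow, one_apply, Finset.prod_ite_zero, funext_iff]

theorem tpow_conjTranspose (M : Matrix (Fin d) (Fin d) ℂ) : tpow d m Mᴴ = (tpow d m M)ᴴ := by
  ext f g
  simp [tpow]

theorem tpow_mem_unitaryGroup {M : Matrix (Fin d) (Fin d) ℂ} (hM : M ∈ unitaryGroup (Fin d) ℂ) :
    tpow d m M ∈ unitaryGroup (Fin m → Fin d) ℂ := by
  rw [mem_unitaryGroup_iff, star_eq_conjTranspose] at hM ⊢
  rw [← tpow_conjTranspose, ← tpow_mul, hM, tpow_one]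

end TensorPower

theorem norm_chu (d k : ℕ) : ‖chu d k‖ = 1 := by
  simp [chu, norm_exp]

/-- The primitive root of unity `ω = exp(2πi/d)`, whose powers are the eigenvalues of `Zd d`. -/
def phaseRoot (d : ℕ) : ℂ := exp (2 * Real.pi * I / d)

theorem isPrimitiveRoot_phaseRoot (d : ℕ) [NeZero d] : IsPrimitiveRoot (phaseRoot d) d :=
  isPrimitiveRoot_exp d (NeZero.ne d)

theorem phaseRoot_mem_unitary (d : ℕ) : phaseRoot d ∈ unitary ℂ :=
  mem_unitary_of_norm_eq_one (by simp [phaseRoot, norm_exp])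

theorem Zd_eq_diagonal (d : ℕ) : Zd d = diagonal fun k : Fin d => phaseRoot d ^ (k : ℕ) := by
  ext j k
  simp only [Zd, phaseRoot, of_apply, diagonal_apply, ← exp_nat_mul]
  obtain rfl | hjk := eq_or_ne j k
  · ring_nf
  · simp [hjk]

theorem Zd_mem_unitaryGroup (d : ℕ) : Zd d ∈ unitaryGroup (Fin d) ℂ := by
  rw [Zd_eq_diagonal]
  exact diagonal_mem_unitaryGroup fun k => pow_mem (phaseRoot_mem_unitary d) _

section Shift

variable (d : ℕ) [NeZero d]

theorem Xd_eq_permMatrixHom_addRight : Xd d = permMatrixHom (Equiv.addRight (1 : Fin d)) := by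
  ext p q
  rw [permMatrixHom_addRight_apply]
  simp [Xd, Fin.ext_iff, Fin.val_add]

theorem Xd_mem_unitaryGroup : Xd d ∈ unitaryGroup (Fin d) ℂ := by
  rw [Xd_eq_permMatrixHom_addRight]
  exact permMatrix_mem_unitaryGroup _

open Fin.CommRing in
theorem addRight_one_pow (k : Fin d) :
    Equiv.addRight (1 : Fin d) ^ (k : ℕ) = Equiv.addRight k := by
  ext1 q
  rw [Equiv.Perm.coe_pow, Equiv.coe_addRight, add_right_iterate, nsmul_one,
    Fin.cast_val_eq_self, Equiv.coe_addRight]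

theorem Xd_pow_apply (k p q : Fin d) : (Xd d ^ (k : ℕ)) p q = if p = q + k then 1 else 0 := by
  rw [Xd_eq_permMatrixHom_addRight, ← map_pow, addRight_one_pow, permMatrixHom_addRight_apply]

theorem Xd_pow_mul_Zd_pow_apply (k l p q : Fin d) :
    (Xd d ^ (k : ℕ) * Zd d ^ (l : ℕ)) p q =
      if p = q + k then phaseRoot d ^ (q * l : ℕ) else 0 := by
  rw [Zd_eq_diagonal, diagonal_pow, mul_diagonal, Xd_pow_apply, ite_mul, one_mul, zero_mul,
    Pi.pow_apply, ← pow_mul]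

end Shift

theorem kronecker_one_mulVec_Bell (d : ℕ) (A : Matrix (Fin d) (Fin d) ℂ) :
    (A ⊗ₖ (1 : Matrix (Fin d) (Fin d) ℂ)) *ᵥ Bell d = (√d : ℂ)⁻¹ • vec Aᵀ := by
  have hBell : Bell d = (√d : ℂ)⁻¹ • vec 1 := by
    ext ⟨p, q⟩
    simp [Bell, one_apply, eq_comm]
  rw [hBell, mulVec_smul, kronecker_mulVec_vec, Matrix.one_mul, Matrix.one_mul]

/-- The generalized Bell vector `(X^k Z^l ⊗ I) Φ_d`. -/
def bellVec (d k l : ℕ) : Fin d × Fin d → ℂ :=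
  ((Xd d ^ k * Zd d ^ l) ⊗ₖ (1 : Matrix (Fin d) (Fin d) ℂ)) *ᵥ Bell d

theorem bellVec_apply (d k l : ℕ) (p q : Fin d) :
    bellVec d k l (p, q) = (√d : ℂ)⁻¹ * (Xd d ^ k * Zd d ^ l) p q := by
  rw [bellVec, kronecker_one_mulVec_Bell]
  rfl

theorem Pi'_eq_vecMulVec_bellVec (d k l : ℕ) :
    Pi' d k l = vecMulVec (bellVec d k l) (star (bellVec d k l)) := by
  rw [Pi', bellVec, mul_vecMulVec, vecMulVec_mul, star_mulVec, conjTranspose_kronecker,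
    conjTranspose_mul, conjTranspose_pow, conjTranspose_pow, conjTranspose_one]

theorem isHermitian_Pi' (d k l : ℕ) : (Pi' d k l).IsHermitian := by
  rw [Pi'_eq_vecMulVec_bellVec, IsHermitian, conjTranspose_vecMulVec, star_star]

/-- The generalized Bell basis, collected as the columns `(k, l)` of a matrix. -/
def bellBasis (d : ℕ) : Matrix (Fin d × Fin d) (Fin d × Fin d) ℂ :=
  of fun x kl => bellVec d kl.1 kl.2 x

section BellBasis

variable (d : ℕ) [NeZero d]

/-- The shear `(p, q) ↦ (p - q, q)` of the index set, the arithmetic modulo `d`. As `permMatrix`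
puts `1` at the entries `(x, shear x)`, its permutation matrix sends the basis vector `(k, q)` to
`(q + k, q)`. -/
def shear : Equiv.Perm (Fin d × Fin d) where
  toFun x := (x.1 - x.2, x.2)
  invFun x := (x.1 + x.2, x.2)
  left_inv _ := by simp
  right_inv _ := by simp

theorem bellBasis_eq_shear_mul_dftMatrix :
    bellBasis d = (shear d).permMatrix ℂ *
      ((1 : Matrix (Fin d) (Fin d) ℂ) ⊗ₖ dftMatrix d (phaseRoot d)) := by
  ext ⟨p, q⟩ ⟨k, l⟩
  rw [bellBasis, of_apply, bellVec_apply, Xd_pow_mul_Zd_pow_apply, PEquiv.toMatrix_toPEquiv_mul]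
  simp [shear, dftMatrix, one_apply, sub_eq_iff_eq_add, add_comm, div_eq_inv_mul]

theorem bellBasis_mem_unitaryGroup : bellBasis d ∈ unitaryGroup (Fin d × Fin d) ℂ := by
  rw [bellBasis_eq_shear_mul_dftMatrix]
  exact mul_mem (permMatrix_mem_unitaryGroup _) <| kronecker_mem_unitary (one_mem _) <|
    dftMatrix_mem_unitaryGroup (isPrimitiveRoot_phaseRoot d)

theorem completeOrthogonalIdempotents_Pi' :
    CompleteOrthogonalIdempotents fun kl : Fin d × Fin d => Pi' d kl.1 kl.2 := by
  simp_rw [Pi'_eq_vecMulVec_bellVec]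
  exact completeOrthogonalIdempotents_vecMulVec_col (bellBasis_mem_unitaryGroup d)

end BellBasis

theorem Udec_core_unitary_general (d : ℕ) [NeZero d] {κ : Type*} [Fintype κ] [DecidableEq κ]
    (U : ℕ → ℕ → Matrix κ κ ℂ) (hU : ∀ k < d, ∀ l < d, U k l ∈ unitaryGroup κ ℂ) :
    ∑ k ∈ Finset.range d, ∑ l ∈ Finset.range d, Pi' d k l ⊗ₖ U k l
      ∈ unitaryGroup ((Fin d × Fin d) × κ) ℂ := by
  simp_rw [Finset.sum_range, ← Fintype.sum_prod_type']
  exact sum_kronecker_mem_unitaryGroup (completeOrthogonalIdempotents_Pi' d)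
    (fun kl => isHermitian_Pi' d kl.1 kl.2) (fun kl => hU kl.1 kl.1.2 kl.2 kl.2.2)

/-- The core of the decryption operator,
`A = ∑_{k,l<d} (c(k)c(l))⁻¹ (Π_{k,l} ⊗ U_{k,l})` with
`U_{k,l}` the `(n−1)`-fold tensor power of `X^k (Z†)^l`, is unitary. -/
theorem Udec_core_unitary (d n : ℕ) (hd : 2 ≤ d) (hn : 2 ≤ n) :
    (∑ k ∈ Finset.range d, ∑ l ∈ Finset.range d,
        (chu d k * chu d l)⁻¹ • (Pi' d k l ⊗ₖ tpow d (n - 1) (Xd d ^ k * (Zd d)ᴴ ^ l)))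
      ∈ Matrix.unitaryGroup ((Fin d × Fin d) × (Fin (n - 1) → Fin d)) ℂ := by
  have : NeZero d := ⟨by lia⟩
  simp_rw [← kronecker_smul]
  refine Udec_core_unitary_general d _ fun k _ l _ => Unitary.smul_mem_of_mem ?_ ?_
  · exact mem_unitary_of_norm_eq_one (by simp [norm_chu])
  · exact tpow_mem_unitaryGroup _ <| mul_mem (pow_mem (Xd_mem_unitaryGroup d) k) <|
      pow_mem (Unitary.star_mem (Zd_mem_unitaryGroup d)) l
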